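/- In the quadratic setting, suppose the operator norm of Σ_{i=1}^M w_i K_i is strictly less than 1. Then A is a contraction on ℝ^d, the matrix Σ_{i=1}^M w_i (I − K_i) = I − Σ_{i=1}^M w_i K_i is invertible, and the unique fixed point of A is x̃ = (Σ_{i=1}^M w_i (I − K_i))^{-1} Σ_{i=1}^M w_i (I − K_i) x_i*. -/

import Mathlib

/-- Apply a real `d × d` matrix as a continuous linear map on Euclidean space. -/
noncomputable def mApp {d : ℕ} (A : Matrix (Fin d) (Fin d) ℝ) :
    EuclideanSpace ℝ (Fin d) →L[ℝ] EuclideanSpace ℝ (Fin d) :=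
  Matrix.toEuclideanCLM (𝕜 := ℝ) A

/-- The ℓ²-operator (spectral) norm of a real matrix. -/
noncomputable def opNorm {d : ℕ} (A : Matrix (Fin d) (Fin d) ℝ) : ℝ :=
  ‖mApp A‖

/-- In the quadratic setting, if `‖∑ wᵢ Kᵢ‖_op < 1` then the
aggregate operator is a contraction, `∑ wᵢ (I - Kᵢ)` is invertible, and the
unique fixed point is the stated one. -/
theorem quadratic_fixed_point
    (d M : ℕ) (hd : 1 ≤ d) (hM : 1 ≤ M)
    (H P : Fin M → Matrix (Fin d) (Fin d) ℝ)
    (hHsymm : ∀ i, (H i).IsSymm) (hHpd : ∀ i, (H i).PosDef)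
    (hPsymm : ∀ i, (P i).IsSymm) (hPpd : ∀ i, (P i).PosDef)
    (e : Fin M → EuclideanSpace ℝ (Fin d))
    (w : Fin M → ℝ) (hw : ∀ i, 0 < w i) (hw1 : ∑ i, w i = 1)
    (η : Fin M → ℝ) (hη : ∀ i, 0 < η i)
    (τ : Fin M → ℕ) (hτ : ∀ i, 1 ≤ τ i)
    (K : Fin M → Matrix (Fin d) (Fin d) ℝ)
    (hK : ∀ i, K i = ((1 : Matrix (Fin d) (Fin d) ℝ) - η i • (P i * H i)) ^ τ i)
    (xs : Fin M → EuclideanSpace ℝ (Fin d))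
    (hxs : ∀ i, xs i = mApp (H i)⁻¹ (e i))
    (A : EuclideanSpace ℝ (Fin d) → EuclideanSpace ℝ (Fin d))
    (hA : ∀ x, A x = ∑ i, w i • (mApp (K i) (x - xs i) + xs i))
    (hop : opNorm (∑ i, w i • K i) < 1) :
    (∃ c : NNReal, c < 1 ∧ LipschitzWith c A)
    ∧ IsUnit (∑ i, w i • ((1 : Matrix (Fin d) (Fin d) ℝ) - K i))
    ∧ (A (mApp (∑ i, w i • ((1 : Matrix (Fin d) (Fin d) ℝ) - K i))⁻¹
          (∑ i, w i • mApp ((1 : Matrix (Fin d) (Fin d) ℝ) - K i) (xs i)))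
        = mApp (∑ i, w i • ((1 : Matrix (Fin d) (Fin d) ℝ) - K i))⁻¹
          (∑ i, w i • mApp ((1 : Matrix (Fin d) (Fin d) ℝ) - K i) (xs i)))
    ∧ ∀ x, A x = x →
        x = mApp (∑ i, w i • ((1 : Matrix (Fin d) (Fin d) ℝ) - K i))⁻¹
          (∑ i, w i • mApp ((1 : Matrix (Fin d) (Fin d) ℝ) - K i) (xs i)) := by
  have hN : ∑ i, w i • ((1 : Matrix (Fin d) (Fin d) ℝ) - K i) = 1 - ∑ i, w i • K i := by
    simp only [smul_sub, Finset.sum_sub_distrib, ← Finset.sum_smul, hw1, one_smul]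
  have hAx : ∀ x, A x = mApp (∑ i, w i • K i) x
      + ∑ i, w i • mApp ((1 : Matrix (Fin d) (Fin d) ℝ) - K i) (xs i) := by
    intro x
    rw [hA]
    simp only [mApp, map_sum, map_smul, map_sub, map_one, ContinuousLinearMap.sum_apply,
      ContinuousLinearMap.smul_apply, ContinuousLinearMap.sub_apply,
      ContinuousLinearMap.one_apply]
    rw [← Finset.sum_add_distrib]
    refine Finset.sum_congr rfl fun i _ => ?_
    rw [← smul_add]
    congr 1
    abel
  generalize (∑ i, w i • mApp ((1 : Matrix (Fin d) (Fin d) ℝ) - K i) (xs i)) = b at *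
  rw [hN]
  generalize (∑ i, w i • K i) = S at *
  have hu : IsUnit (1 - S) := by
    have h1 : IsUnit (1 - mApp S) := isUnit_one_sub_of_norm_lt_one hop
    have h2 : mApp (1 - S) = 1 - mApp S := by simp [mApp]
    rw [← h2] at h1
    exact (MulEquiv.isUnit_map (Matrix.toEuclideanCLM (n := Fin d) (𝕜 := ℝ))).1 h1
  have hdet : IsUnit (1 - S).det := (Matrix.isUnit_iff_isUnit_det _).1 hu
  have hmul : ∀ (B C : Matrix (Fin d) (Fin d) ℝ) x, mApp B (mApp C x) = mApp (B * C) x := by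
    intro B C x
    simp [mApp]
  have hone : ∀ x, mApp (1 : Matrix (Fin d) (Fin d) ℝ) x = x := by
    intro x
    simp [mApp]
  have hsub : ∀ x, mApp (1 - S) x = x - mApp S x := by
    intro x
    simp [mApp]
  refine ⟨⟨‖mApp S‖₊, hop, ?_⟩, hu, ?_, ?_⟩
  · refine LipschitzWith.of_dist_le_mul fun x y => ?_
    rw [hAx, hAx, dist_add_right]
    exact (mApp S).lipschitz.dist_le_mul x y
  · have h := hsub (mApp (1 - S)⁻¹ b)
    rw [hmul, Matrix.mul_nonsing_inv _ hdet, hone] at h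
    rw [hAx]
    nth_rewrite 2 [h]
    abel
  · intro x hx
    have h : b = mApp (1 - S) x := by
      rw [hsub, eq_sub_iff_add_eq', ← hAx, hx]
    rw [h, hmul, Matrix.nonsing_inv_mul _ hdet, hone]
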